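/- arXiv:2009.00925 — 2 statements merged into one kernel-verified Lean document; each statement's English description precedes it below -/
import Mathlib

section
/- Let (X,f) be a topological dynamical system and p ∈ ℕ with p ≥ 1. Then IN(X,f) = IN(X,f^p) and IT(X,f) = IT(X,f^p). -/
open Set Filter Topology ENNReal

noncomputable section

/-- The circle `𝕊 = ℝ / ℤ`, identified with `{z ∈ ℂ : |z| = 1}` via `x ↦ exp(2πix)`. -/
abbrev Circle1 : Type := AddCircle (1 : ℝ)

/-- The natural projection `e : ℝ → 𝕊`, `e(x) = exp(2πix)`. -/
def projS : ℝ → Circle1 := fun x => (x : Circle1)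

/-- `𝒰` is an open cover of `X`. -/
def IsOpenCover {X : Type*} [TopologicalSpace X] (U : Set (Set X)) : Prop :=
  (∀ A ∈ U, IsOpen A) ∧ ⋃₀ U = univ

/-- `N(𝒰)`: the minimal cardinality of a subcover of `𝒰`. -/
def coverN {X : Type*} (U : Set (Set X)) : ℕ :=
  sInf {n | ∃ V : Finset (Set X), ↑V ⊆ U ∧ ⋃₀ (V : Set (Set X)) = univ ∧ V.card = n}

/-- The join `⋁_{i} f^{-t i} 𝒰` of preimages of a cover along a finite sequence of times. -/
def timeJoin {X : Type*} (f : X → X) (U : Set (Set X)) {n : ℕ} (t : Fin n → ℕ) :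
    Set (Set X) :=
  {A | ∃ u : Fin n → Set X, (∀ i, u i ∈ U) ∧ A = ⋂ i, f^[t i] ⁻¹' u i}

/-- Topological entropy of `f` with respect to the cover `𝒰`:
`lim (1/n) log N(⋁_{i=1}^n f^{-i} 𝒰)`. -/
def coverEnt {X : Type*} (f : X → X) (U : Set (Set X)) : ℝ≥0∞ :=
  Filter.limsup
    (fun n : ℕ =>
      ENNReal.ofReal (Real.log (coverN (timeJoin f U (fun i : Fin n => (i : ℕ) + 1))) / n))
    Filter.atTop

/-- Topological entropy `h_top(f)`. -/
def topEnt {X : Type*} [TopologicalSpace X] (f : X → X) : ℝ≥0∞ :=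
  ⨆ U ∈ {U : Set (Set X) | IsOpenCover U}, coverEnt f U

/-- Topological sequence entropy of `f` along the sequence `a` with respect to the cover `𝒰`. -/
def seqEnt {X : Type*} (f : X → X) (a : ℕ → ℕ) (U : Set (Set X)) : ℝ≥0∞ :=
  Filter.limsup
    (fun n : ℕ =>
      ENNReal.ofReal (Real.log (coverN (timeJoin f U (fun i : Fin n => a (i : ℕ)))) / n))
    Filter.atTop

/-- `(X,f)` is topological null: the sequence entropy along every increasing sequence of
positive integers vanishes. -/
def IsNull {X : Type*} [TopologicalSpace X] (f : X → X) : Prop :=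
  ∀ a : ℕ → ℕ, StrictMono a → (∀ n, 0 < a n) →
    ∀ U : Set (Set X), IsOpenCover U → seqEnt f a U = 0

/-- The maximal pattern complexity `p*_{X,𝒰}(n)`. -/
def patternComp {X : Type*} (f : X → X) (U : Set (Set X)) (n : ℕ) : ℕ :=
  sSup {m | ∃ t : Fin n → ℕ, m = coverN (timeJoin f U t)}

/-- A function `q : ℕ → ℕ` is of polynomial order: `q(n) ≤ C n^C` for some constant `C > 0`. -/
def PolyOrder (q : ℕ → ℕ) : Prop :=
  ∃ C : ℝ, 0 < C ∧ ∀ n : ℕ, 1 ≤ n → (q n : ℝ) ≤ C * (n : ℝ) ^ C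

/-- The ω-limit set `ω(x,f) = ⋂_n closure {f^i(x) : i ≥ n}`. -/
def omegaSet {X : Type*} [TopologicalSpace X] (f : X → X) (x : X) : Set X :=
  ⋂ n : ℕ, closure {y | ∃ i, n ≤ i ∧ f^[i] x = y}

/-- `I` is an independence set for the pair of sets `{U, V}`. -/
def IsIndepSet {X : Type*} (f : X → X) (U V : Set X) (I : Set ℕ) : Prop :=
  ∀ J : Finset ℕ, ↑J ⊆ I → J.Nonempty →
    ∀ S : ℕ → Bool, (⋂ i ∈ J, f^[i] ⁻¹' (if S i then U else V)).Nonempty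

/-- `⟨x,y⟩` is an IN-pair: every pair of neighborhoods has arbitrarily large finite
independence sets. -/
def IsINPair {X : Type*} [TopologicalSpace X] (f : X → X) (x y : X) : Prop :=
  ∀ U ∈ nhds x, ∀ V ∈ nhds y, ∀ m : ℕ, ∃ J : Finset ℕ, m ≤ J.card ∧ IsIndepSet f U V ↑J

/-- `⟨x,y⟩` is an IT-pair: every pair of neighborhoods has an infinite independence set. -/
def IsITPair {X : Type*} [TopologicalSpace X] (f : X → X) (x y : X) : Prop :=
  ∀ U ∈ nhds x, ∀ V ∈ nhds y, ∃ I : Set ℕ, I.Infinite ∧ IsIndepSet f U V I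

/-- A closed nondegenerate proper subinterval (arc) of the circle. -/
def IsClosedArc (J : Set Circle1) : Prop :=
  ∃ c d : ℝ, c < d ∧ d - c < 1 ∧ J = projS '' Icc c d

/-- A closed nondegenerate subinterval of a linearly ordered space. -/
def IsClosedSubInt {X : Type*} [Preorder X] (J : Set X) : Prop :=
  ∃ c d : X, c < d ∧ J = Icc c d

/-- `J, f(J), …, f^{n-1}(J)` are pairwise disjoint and `f^n(J) = J`. -/
def IsPeriodicSet {X : Type*} (f : X → X) (J : Set X) (n : ℕ) : Prop :=
  0 < n ∧ (∀ i j, i < j → j < n → Disjoint (f^[i] '' J) (f^[j] '' J)) ∧ f^[n] '' J = J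

/-- `⟨x,y⟩` is a separable pair: `x` and `y` lie in two disjoint periodic intervals
(`isInt` is the notion of closed nondegenerate subinterval of the phase space). -/
def SeparablePair {X : Type*} (isInt : Set X → Prop) (f : X → X) (x y : X) : Prop :=
  ∃ J₁ J₂ : Set X, ∃ n₁ n₂ : ℕ,
    isInt J₁ ∧ IsPeriodicSet f J₁ n₁ ∧ isInt J₂ ∧ IsPeriodicSet f J₂ n₂ ∧
    Disjoint J₁ J₂ ∧ x ∈ J₁ ∧ y ∈ J₂

/-- `⟨x,y⟩` is a non-separable pair. -/
def NonSeparablePair {X : Type*} [TopologicalSpace X] (isInt : Set X → Prop)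
    (f : X → X) (x y : X) : Prop :=
  x ≠ y ∧ (∃ z, x ∈ omegaSet f z ∧ y ∈ omegaSet f z) ∧ ¬ SeparablePair isInt f x y

/-- `F` is a lifting of the circle map `f`. -/
def IsLift (f : Circle1 → Circle1) (F : ℝ → ℝ) : Prop :=
  Continuous F ∧ ∀ x : ℝ, projS (F x) = f (projS x)

/-- `Per(f) ≠ ∅`. -/
def HasPeriodicPt {X : Type*} (f : X → X) : Prop :=
  ∃ y, ∃ q : ℕ, 0 < q ∧ f^[q] y = y

/-- `E` is an `(A,n,ε)`-spanning set. -/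
def IsSpanningSet {X : Type*} [PseudoMetricSpace X] (f : X → X) (a : ℕ → ℕ) (n : ℕ)
    (ε : ℝ) (E : Set X) : Prop :=
  ∀ x : X, ∃ y ∈ E, ∀ i : Fin n, dist (f^[a (i : ℕ)] x) (f^[a (i : ℕ)] y) < ε

/-- `r_A(n,ε)`: minimal cardinality of an `(A,n,ε)`-spanning set. -/
def spanNum {X : Type*} [PseudoMetricSpace X] (f : X → X) (a : ℕ → ℕ) (n : ℕ) (ε : ℝ) : ℕ :=
  sInf {m | ∃ E : Finset X, IsSpanningSet f a n ε ↑E ∧ E.card = m}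

/-- `r*(n,ε) = sup_A r_A(n,ε)` over all increasing sequences `A`. -/
def rStar {X : Type*} [PseudoMetricSpace X] (f : X → X) (n : ℕ) (ε : ℝ) : ℕ :=
  sSup {m | ∃ a : ℕ → ℕ, StrictMono a ∧ m = spanNum f a n ε}

/-- `E` is an `(A,n,ε)`-separated set. -/
def IsSeparatedSet {X : Type*} [PseudoMetricSpace X] (f : X → X) (a : ℕ → ℕ) (n : ℕ)
    (ε : ℝ) (E : Set X) : Prop :=
  ∀ x ∈ E, ∀ y ∈ E, x ≠ y → ∃ i : Fin n, ε ≤ dist (f^[a (i : ℕ)] x) (f^[a (i : ℕ)] y)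

/-- `s_A(n,ε)`: maximal cardinality of an `(A,n,ε)`-separated set. -/
def sepNum {X : Type*} [PseudoMetricSpace X] (f : X → X) (a : ℕ → ℕ) (n : ℕ) (ε : ℝ) : ℕ :=
  sSup {m | ∃ E : Finset X, IsSeparatedSet f a n ε ↑E ∧ E.card = m}

/-- `s*(n,ε) = sup_A s_A(n,ε)` over all increasing sequences `A`. -/
def sStar {X : Type*} [PseudoMetricSpace X] (f : X → X) (n : ℕ) (ε : ℝ) : ℕ :=
  sSup {m | ∃ a : ℕ → ℕ, StrictMono a ∧ m = sepNum f a n ε}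

/-!
Independence sets pass between `f` and `f^p` by arithmetic alone. If `I` is an independence set
for `f^p`, then `p I` is one for `f`, with the same witnesses. Conversely, if `I` is an
independence set for `f`, then for each `r` the set `{q | p q + r ∈ I}` is one for `f^p`: replace
a witness `z` by `f^r z`. By the pigeonhole principle, some residue class mod `p` contains
infinitely many elements of `I` when `I` is infinite, and at least `m` of them when
`|I| ≥ p m`. The neighborhoods stay the same throughout.
-/

theorem IsIndepSet.iterate_preimage {X : Type*} {f : X → X} {U V : Set X} {I : Set ℕ} {p : ℕ}
    (hp : 1 ≤ p) (r : ℕ) (h : IsIndepSet f U V I) :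
    IsIndepSet (f^[p]) U V {q | p * q + r ∈ I} := by
  intro J hJ hne S
  -- The symbol prescribed for `f` at time `p * q + r` is `S q`.
  obtain ⟨z, hz⟩ := h (J.image fun q => p * q + r)
    (by
      intro i hi
      obtain ⟨q, hq, rfl⟩ := Finset.mem_image.1 (Finset.mem_coe.1 hi)
      exact hJ hq)
    (hne.image _) (fun i => S ((i - r) / p))
  refine ⟨f^[r] z, ?_⟩
  simp only [mem_iInter, mem_preimage] at hz ⊢
  intro q hq
  have := hz _ (Finset.mem_image_of_mem _ hq)
  rwa [Nat.add_sub_cancel, Nat.mul_div_cancel_left _ hp, Function.iterate_add_apply,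
    Function.iterate_mul] at this

theorem IsIndepSet.of_iterate {X : Type*} {f : X → X} {U V : Set X} {I : Set ℕ} {p : ℕ}
    (hp : 1 ≤ p) (h : IsIndepSet (f^[p]) U V I) :
    IsIndepSet f U V ((fun q => p * q) '' I) := by
  intro J hJ hne S
  obtain ⟨z, hz⟩ := h (J.image fun i => i / p)
    (by
      intro q hq
      obtain ⟨i, hi, rfl⟩ := Finset.mem_image.1 (Finset.mem_coe.1 hq)
      obtain ⟨k, hk, rfl⟩ := hJ hi
      simpa only [Nat.mul_div_cancel_left _ hp] using hk)
    (hne.image _) (fun q => S (p * q))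
  refine ⟨z, ?_⟩
  simp only [mem_iInter, mem_preimage] at hz ⊢
  intro i hi
  have := hz _ (Finset.mem_image_of_mem _ hi)
  obtain ⟨q, -, rfl⟩ := hJ hi
  simpa only [Nat.mul_div_cancel_left _ hp, Function.iterate_mul] using this

theorem IsIndepSet.mono {X : Type*} {f : X → X} {U V : Set X} {I I' : Set ℕ}
    (h : IsIndepSet f U V I) (hI : I' ⊆ I) : IsIndepSet f U V I' :=
  fun J hJ => h J (hJ.trans hI)

theorem exists_infinite_residue {I : Set ℕ} (hI : I.Infinite) {p : ℕ} (hp : 1 ≤ p) :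
    ∃ r, {q | p * q + r ∈ I}.Infinite := by
  by_contra! hcon
  refine hI (((Set.finite_Iio p).biUnion fun r _ =>
    (hcon r).image fun q => p * q + r).subset ?_)
  intro i hi
  have e : p * (i / p) + i % p = i := Nat.div_add_mod i p
  exact mem_biUnion (Nat.mod_lt i hp) ⟨i / p, by simpa only [mem_ofPred_eq, e] using hi, e⟩

theorem exists_large_residue {J : Finset ℕ} {p m : ℕ} (hp : 1 ≤ p) (hJ : p * m ≤ J.card) :
    ∃ r, ∃ K : Finset ℕ, m ≤ K.card ∧ (K : Set ℕ) ⊆ {q | p * q + r ∈ (J : Set ℕ)} := by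
  obtain ⟨r, -, hr⟩ := Finset.exists_le_card_fiber_of_mul_le_card_of_maps_to
    (s := J) (t := Finset.range p) (f := fun i => i % p) (n := m)
    (fun i _ => Finset.mem_range.2 (Nat.mod_lt i hp)) ⟨0, Finset.mem_range.2 hp⟩
    (by simpa using hJ)
  refine ⟨r, (J.filter fun i => i % p = r).image fun i => i / p, ?_, ?_⟩
  · rwa [Finset.card_image_of_injOn]
    intro a ha b hb hab
    simp only [Finset.coe_filter, mem_ofPred_eq] at ha hb hab
    rw [← Nat.div_add_mod a p, ← Nat.div_add_mod b p, hab, ha.2, hb.2]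
  · intro q hq
    obtain ⟨i, hi, rfl⟩ := Finset.mem_image.1 (Finset.mem_coe.1 hq)
    obtain ⟨hiJ, rfl⟩ := Finset.mem_filter.1 hi
    simpa only [mem_ofPred_eq, Nat.div_add_mod] using Finset.mem_coe.2 hiJ

/-- `IN(X,f) = IN(X,f^p)` and `IT(X,f) = IT(X,f^p)`. -/
theorem IN_IT_pairs_iterate {X : Type*} [MetricSpace X] [CompactSpace X]
    (f : X → X) (hf : Continuous f) (p : ℕ) (hp : 1 ≤ p) :
    (∀ x y : X, IsINPair f x y ↔ IsINPair (f^[p]) x y) ∧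
    (∀ x y : X, IsITPair f x y ↔ IsITPair (f^[p]) x y) := by
  refine ⟨fun x y => ⟨fun h U hU V hV m => ?_, fun h U hU V hV m => ?_⟩,
    fun x y => ⟨fun h U hU V hV => ?_, fun h U hU V hV => ?_⟩⟩
  · obtain ⟨J, hJ, hind⟩ := h U hU V hV (p * m)
    obtain ⟨r, K, hK, hKJ⟩ := exists_large_residue hp hJ
    exact ⟨K, hK, (hind.iterate_preimage hp r).mono hKJ⟩
  · obtain ⟨J, hJ, hind⟩ := h U hU V hV m
    refine ⟨J.image fun q => p * q, ?_, ?_⟩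
    · rwa [Finset.card_image_of_injective _ (mul_right_injective₀ (by omega))]
    · rw [Finset.coe_image]
      exact hind.of_iterate hp
  · obtain ⟨I, hI, hind⟩ := h U hU V hV
    obtain ⟨r, hr⟩ := exists_infinite_residue hI hp
    exact ⟨_, hr, hind.iterate_preimage hp r⟩
  · obtain ⟨I, hI, hind⟩ := h U hU V hV
    exact ⟨_, hI.image (mul_right_injective₀ (by omega)).injOn, hind.of_iterate hp⟩
end
end

section
/- Let f : 𝕊 → 𝕊 be a circle map with h_top(f) = 0 and with a fixed point. Then there exist a lifting F of f and a closed interval I = [a,b] ⊂ ℝ with 1 ≤ b − a < 2 such that F(I) ⊆ I. Moreover: (1) if deg(f) = 0, then b − a = 1 and the image F([a,b]) has length < 1; (2) if deg(f) = 1, then F([a,b]) = [a,b], F([a,b−1]) ⊆ [a,b−1] and F([a+1,b]) ⊆ [a+1,b]; (3) if deg(f) = −1, then F([a,b]) = [a,b], F([a,b−1]) ⊆ [a+1,b] and F([a+1,b]) ⊆ [a,b−1]. -/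
/-! A lifting `F` of `f` has a degree `d`, and zero entropy restricts it through one principle: if,
for some `m > 0` and `δ > 0`, every point has two preimages under `f^m` whose orbits are `δ`-apart at
some time before `m`, then `topEnt f > 0`. Indeed the level-`L` backward tree of any point then has
`2 ^ L` elements which are pairwise told apart before time `m * L`, so at least `2 ^ L` members of the
join of a fine cover are needed (`topEnt_ne_zero_of_backBranching`). Such branching occurs

* when `|d| ≥ 2` (`topEnt_ne_zero_of_two_le_degree`);
* when the lifting of an iterate stretches two points less than `1` apart to distance at least `2`
  (`topEnt_ne_zero_of_stretch`);
* when `d = 0` and `F` oscillates by at least `1` (`topEnt_ne_zero_of_fold`). Here the two preimages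
  of a point may be close to each other at a turning point, and one passes to `f^2`.

Hence `|d| ≤ 1`. If `d = 0`, the range of `F` lies in some `[m, M]` with `M - m < 1`, and `[m, m + 1]`
is the required interval. If `d = 1`, the fixed point gives a lifting fixing both endpoints of some
`[y, y + 1]`; if `d = -1`, any lifting exchanges the endpoints of some `[y, y + 1]`. In both cases the
images of `[y, y + 1]` under the iterates of `F` increase, and by the stretching criterion their union
has diameter at most `2`; its closure is an interval `[a, b]` with `F([a, b]) = [a, b]`
(`exists_invariant_Icc`). When `b - a = 2`, the degree forces `F` to preserve or exchange the two
halves, and one half with a suitable lifting is used instead (`exists_invariant_Icc_lt`). The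
inclusions for `[a, b - 1]` and `[a + 1, b]` follow from `F([a, b]) = [a, b]` and
`F (x + 1) = F x ± 1`. -/

open Set Filter Topology ENNReal

noncomputable section

/-! ### Positive entropy from branching backward orbits -/

/-- Two points are told apart before time `N` at scale `δ`. -/
def SepBefore {X : Type*} [PseudoMetricSpace X] (f : X → X) (δ : ℝ) (N : ℕ) (x y : X) : Prop :=
  ∃ j < N, δ ≤ dist (f^[j] x) (f^[j] y)

/-- Every point has two preimages under `f^m` which are told apart before time `m`. -/
def BackBranching {X : Type*} [PseudoMetricSpace X] (f : X → X) (δ : ℝ) (m : ℕ) : Prop :=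
  ∀ y, ∃ x₁ x₂, f^[m] x₁ = y ∧ f^[m] x₂ = y ∧ SepBefore f δ m x₁ x₂

/-- The `L`-th level of the backward tree of a point has `2 ^ L` elements, and two of them are told
apart at the last moment before their orbits merge. -/
lemma BackBranching.exists_tree {X : Type*} [MetricSpace X] {f : X → X} {δ : ℝ} {m : ℕ}
    (hδ : 0 < δ) (h : BackBranching f δ m) (L : ℕ) (y : X) :
    ∃ E : Finset X, E.card = 2 ^ L ∧ (∀ x ∈ E, f^[m * L] x = y) ∧
      ∀ x ∈ E, ∀ x' ∈ E, x ≠ x' → SepBefore f δ (m * L) x x' := by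
  classical
  induction L generalizing y with
  | zero =>
    refine ⟨{y}, by simp, by simp, ?_⟩
    intro x hx x' hx' hne
    simp only [Finset.mem_singleton] at hx hx'
    exact absurd (hx.trans hx'.symm) hne
  | succ L ih =>
    obtain ⟨x₁, x₂, h₁, h₂, j, hj, hsep⟩ := h y
    obtain ⟨E₁, hc₁, he₁, hs₁⟩ := ih x₁
    obtain ⟨E₂, hc₂, he₂, hs₂⟩ := ih x₂
    have hne : x₁ ≠ x₂ := by
      rintro rfl
      simp only [dist_self] at hsep
      linarith
    have hlt : m * L + j < m * (L + 1) := by rw [mul_add_one]; omega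
    have mono : ∀ x x', SepBefore f δ (m * L) x x' → SepBefore f δ (m * (L + 1)) x x' := by
      rintro x x' ⟨i, hi, hd⟩
      exact ⟨i, by omega, hd⟩
    have cross : ∀ x ∈ E₁, ∀ x' ∈ E₂, SepBefore f δ (m * (L + 1)) x x' := by
      intro x hx x' hx'
      refine ⟨j + m * L, by omega, ?_⟩
      rwa [Function.iterate_add_apply, Function.iterate_add_apply, he₁ x hx, he₂ x' hx']
    refine ⟨E₁ ∪ E₂, ?_, ?_, ?_⟩
    · rw [Finset.card_union_of_disjoint, hc₁, hc₂]
      · ring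
      · rw [Finset.disjoint_left]
        intro x hx hx'
        exact hne ((he₁ x hx).symm.trans (he₂ x hx'))
    · intro x hx
      rw [mul_add_one, add_comm, Function.iterate_add_apply]
      rcases Finset.mem_union.1 hx with hx | hx
      · rw [he₁ x hx, h₁]
      · rw [he₂ x hx, h₂]
    · intro x hx x' hx' hxx
      rcases Finset.mem_union.1 hx with hx | hx <;> rcases Finset.mem_union.1 hx' with hx' | hx'
      · exact mono _ _ (hs₁ x hx x' hx' hxx)
      · exact cross x hx x' hx'
      · obtain ⟨i, hi, hd⟩ := cross x' hx' x hx
        exact ⟨i, hi, by rwa [dist_comm]⟩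
      · exact mono _ _ (hs₂ x hx x' hx' hxx)

/-- With respect to a finite cover by sets of diameter less than `δ`, no member of the join contains
two points of one level of the backward tree. -/
lemma le_coverN_timeJoin {X : Type*} [MetricSpace X] [Nonempty X] {f : X → X} {δ : ℝ} {m : ℕ}
    (hδ : 0 < δ) (hm : 0 < m) (h : BackBranching f δ m) {U : Set (Set X)} (hU : U.Finite)
    (hcov : ⋃₀ U = univ) (hdiam : ∀ A ∈ U, ∀ x ∈ A, ∀ y ∈ A, dist x y < δ) (L : ℕ) :
    2 ^ L ≤ coverN (timeJoin f U (fun i : Fin (m * L) => (i : ℕ) + 1)) := by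
  classical
  have hsurj : Function.Surjective f := by
    intro y
    obtain ⟨x, -, hx, -⟩ := h y
    obtain ⟨k, rfl⟩ := Nat.exists_eq_succ_of_ne_zero hm.ne'
    exact ⟨f^[k] x, by rwa [← Function.iterate_succ_apply' f k x]⟩
  set T := timeJoin f U (fun i : Fin (m * L) => (i : ℕ) + 1) with hT
  have hTfin : T.Finite := by
    have hpi : {u : Fin (m * L) → Set X | ∀ i, u i ∈ U}.Finite := Set.Finite.pi' fun _ => hU
    refine (hpi.image fun u => ⋂ i : Fin (m * L), f^[(i : ℕ) + 1] ⁻¹' u i).subset ?_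
    rintro A ⟨u, hu, rfl⟩
    exact ⟨u, hu, rfl⟩
  have hTcov : ⋃₀ T = univ := by
    refine eq_univ_of_forall fun x => ?_
    have hx : ∀ y : X, ∃ A ∈ U, y ∈ A := fun y => by
      have : y ∈ ⋃₀ U := hcov ▸ mem_univ y
      exact this
    choose A hA hmem using hx
    exact ⟨_, ⟨fun i => A (f^[(i : ℕ) + 1] x), fun i => hA _, rfl⟩, mem_iInter.2 fun i => hmem _⟩
  refine le_csInf ⟨_, hTfin.toFinset, by simp, by simpa using hTcov, rfl⟩ ?_
  rintro n ⟨V, hVT, hVcov, rfl⟩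
  obtain ⟨E, hE, -, hsep⟩ := h.exists_tree hδ L (Classical.arbitrary X)
  -- the join only records times `1, …, mL`, so the tree is pulled back by one step
  choose p hp using hsurj
  have hV : ∀ x : X, ∃ A ∈ V, p x ∈ A := fun x => by
    have : p x ∈ ⋃₀ (V : Set (Set X)) := hVcov ▸ mem_univ _
    obtain ⟨A, hA, hx⟩ := this
    exact ⟨A, hA, hx⟩
  choose A hA hmem using hV
  rw [← hE]
  refine Finset.card_le_card_of_injOn A (fun x _ => hA x) ?_
  intro x hx x' hx' hxx
  by_contra hne
  obtain ⟨j, hj, hd⟩ := hsep x hx x' hx' hne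
  obtain ⟨u, hu, hAu⟩ := hVT (hA x)
  have h1 := hmem x
  have h2 := hmem x'
  rw [← hxx, hAu] at h2
  rw [hAu] at h1
  have h1' := mem_iInter.1 h1 ⟨j, hj⟩
  have h2' := mem_iInter.1 h2 ⟨j, hj⟩
  simp only [mem_preimage, Function.iterate_succ_apply, hp] at h1' h2'
  exact absurd (hdiam _ (hu _) _ h1' _ h2') (not_lt.2 hd)

lemma topEnt_ne_zero_of_backBranching {X : Type*} [MetricSpace X] [CompactSpace X] [Nonempty X]
    {f : X → X} {δ : ℝ} {m : ℕ} (hδ : 0 < δ) (hm : 0 < m) (h : BackBranching f δ m) :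
    topEnt f ≠ 0 := by
  obtain ⟨t, -, htfin, ht⟩ := (isCompact_univ (X := X)).finite_cover_balls (half_pos hδ)
  set U : Set (Set X) := (fun x => Metric.ball x (δ / 2)) '' t with hUdef
  have hUfin : U.Finite := htfin.image _
  have hUcov : ⋃₀ U = univ := by
    rw [hUdef, sUnion_image]
    exact univ_subset_iff.1 ht
  have hdiam : ∀ A ∈ U, ∀ x ∈ A, ∀ y ∈ A, dist x y < δ := by
    rintro _ ⟨c, -, rfl⟩ x hx y hy
    have h1 := Metric.mem_ball.1 hx
    have h2 := Metric.mem_ball'.1 hy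
    linarith [dist_triangle x c y]
  have hopen : IsOpenCover U := by
    refine ⟨?_, hUcov⟩
    rintro _ ⟨c, -, rfl⟩
    exact Metric.isOpen_ball
  have hm' : (0 : ℝ) < m := by exact_mod_cast hm
  have hlog : 0 < Real.log 2 / m := div_pos (Real.log_pos one_lt_two) hm'
  have hle : ENNReal.ofReal (Real.log 2 / m) ≤ coverEnt f U := by
    refine Filter.le_limsup_of_frequently_le ?_
    rw [Filter.frequently_atTop]
    intro N
    refine ⟨m * (N + 1), ?_, ?_⟩
    · nlinarith
    · refine ENNReal.ofReal_le_ofReal ?_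
      have hN : (2 : ℝ) ^ (N + 1) ≤
          coverN (timeJoin f U (fun i : Fin (m * (N + 1)) => (i : ℕ) + 1)) := by
        exact_mod_cast le_coverN_timeJoin hδ hm h hUfin hUcov hdiam (N + 1)
      have h3 := Real.log_le_log (by positivity) hN
      rw [Real.log_pow] at h3
      have hpos : (0 : ℝ) < m * ((N : ℝ) + 1) := by positivity
      push_cast at h3 ⊢
      rw [div_le_div_iff₀ hm' hpos]
      nlinarith
  have h1 : coverEnt f U ≤ topEnt f :=
    le_iSup₂ (f := fun (U : Set (Set X)) (_ : U ∈ {U : Set (Set X) | IsOpenCover U}) =>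
      coverEnt f U) U hopen
  exact ((ENNReal.ofReal_pos.2 hlog).trans_le (hle.trans h1)).ne'

/-! ### Liftings -/

lemma projS_eq_iff {x y : ℝ} : projS x = projS y ↔ ∃ k : ℤ, x = y + k := by
  unfold projS
  rw [← sub_eq_zero, ← AddCircle.coe_sub, AddCircle.coe_eq_zero_iff]
  constructor
  · rintro ⟨k, hk⟩
    exact ⟨k, by simp at hk; linarith⟩
  · rintro ⟨k, hk⟩
    exact ⟨k, by simp; linarith⟩

lemma projS_add_int (x : ℝ) (k : ℤ) : projS (x + k) = projS x := projS_eq_iff.2 ⟨k, rfl⟩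

lemma exists_projS (z : Circle1) : ∃ x, projS x = z := QuotientAddGroup.mk_surjective z

lemma exists_int_of_dist_lt {x y δ : ℝ} (h : dist (projS x) (projS y) < δ) :
    ∃ k : ℤ, |x - y - k| < δ := by
  refine ⟨round (x - y), ?_⟩
  rw [dist_eq_norm, projS, projS, ← AddCircle.coe_sub] at h
  rwa [UnitAddCircle.norm_eq] at h

lemma exists_isLift {f : Circle1 → Circle1} (hf : Continuous f) : ∃ F, IsLift f F := by
  obtain ⟨e₀, he⟩ := exists_projS (f (projS 0))
  let φ : C(ℝ, Circle1) := ⟨fun x => f (projS x), hf.comp (AddCircle.continuous_mk' 1)⟩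
  obtain ⟨F, ⟨-, hF⟩, -⟩ := (AddCircle.isCoveringMap_coe (1 : ℝ)).existsUnique_continuousMap_lifts
    φ 0 e₀ he
  exact ⟨F, F.continuous, fun x => congrFun hF x⟩

lemma IsLift.exists_degree {f : Circle1 → Circle1} {F : ℝ → ℝ} (hF : IsLift f F) :
    ∃ d : ℤ, ∀ x, F (x + 1) = F x + d := by
  have h : ∀ x, ∃ k : ℤ, F (x + 1) - F x = k := fun x => by
    have : projS (F (x + 1)) = projS (F x) := by
      rw [hF.2, hF.2]
      exact congrArg f (by exact_mod_cast projS_add_int x 1)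
    obtain ⟨k, hk⟩ := projS_eq_iff.1 this
    exact ⟨k, by linarith⟩
  choose d hd using h
  have hcont : Continuous d := by
    rw [Int.isClosedEmbedding_coe_real.isEmbedding.continuous_iff]
    have : (fun n : ℤ => (n : ℝ)) ∘ d = fun x => F (x + 1) - F x := funext fun x => (hd x).symm
    rw [show ((Int.cast : ℤ → ℝ) ∘ d) = fun x => F (x + 1) - F x from this]
    have := hF.1
    fun_prop
  refine ⟨d 0, fun x => ?_⟩
  have hx : d x = d 0 := PreconnectedSpace.constant inferInstance hcont
  linarith [hd x, congrArg (fun n : ℤ => (n : ℝ)) hx]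

lemma IsLift.sub_int {f : Circle1 → Circle1} {F : ℝ → ℝ} (hF : IsLift f F) (k : ℤ) :
    IsLift f (fun x => F x - k) := by
  refine ⟨hF.1.sub continuous_const, fun x => ?_⟩
  rw [← hF.2 x]
  exact projS_eq_iff.2 ⟨-k, by push_cast; ring⟩

lemma IsLift.iterate {f : Circle1 → Circle1} {F : ℝ → ℝ} (hF : IsLift f F) (n : ℕ) :
    IsLift f^[n] F^[n] := by
  refine ⟨hF.1.iterate n, fun x => ?_⟩
  induction n generalizing x with
  | zero => rfl
  | succ n ih => rw [Function.iterate_succ_apply, Function.iterate_succ_apply, ih, hF.2]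

lemma map_add_int {F : ℝ → ℝ} {d : ℤ} (h : ∀ x, F (x + 1) = F x + d) (x : ℝ) (k : ℤ) :
    F (x + k) = F x + k * d := by
  induction k using Int.induction_on with
  | zero => simp
  | succ n ih =>
    push_cast at ih ⊢
    rw [← add_assoc, h, ih]; ring
  | pred n ih =>
    push_cast at ih ⊢
    have := h (x + (-n - 1))
    rw [show x + (-(n : ℝ) - 1) + 1 = x + -n by ring, ih] at this
    linarith

/-- Each point of the circle has exactly one representative in `[s, s + 1)`; only existence is
used. -/
lemma exists_rep (s : ℝ) (z : Circle1) : ∃ r, s ≤ r ∧ r < s + 1 ∧ projS r = z := by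
  obtain ⟨x, rfl⟩ := exists_projS z
  refine ⟨x - ⌊x - s⌋, ?_, ?_, projS_eq_iff.2 ⟨-⌊x - s⌋, by push_cast; ring⟩⟩
  · linarith [Int.floor_le (x - s)]
  · linarith [Int.lt_floor_add_one (x - s)]

lemma exists_modulus {F : ℝ → ℝ} (hF : Continuous F) (p q : ℝ) {ε : ℝ} (hε : 0 < ε) :
    ∃ δ > 0, ∀ x ∈ Icc p q, ∀ y ∈ Icc p q, |x - y| < δ → |F x - F y| < ε := by
  have := (isCompact_Icc (a := p) (b := q)).uniformContinuousOn_of_continuous hF.continuousOn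
  obtain ⟨δ, hδ, h⟩ := Metric.uniformContinuousOn_iff.1 this ε hε
  exact ⟨δ, hδ, fun x hx y hy hxy => h x hx y hy hxy⟩


/-! ### Three sources of positive entropy -/

/-- If `G` climbs by at least `2` between `u` and `w`, every point of the circle is hit over two
points between `u` and `w` whose values differ by exactly `1`. -/
lemma exists_pair_of_stretch {G : ℝ → ℝ} (hG : Continuous G) {u w : ℝ} (h : G u + 2 ≤ G w)
    (z : Circle1) :
    ∃ α ∈ uIcc u w, ∃ β ∈ uIcc u w, G β = G α + 1 ∧ projS (G α) = z := by
  obtain ⟨r, h1, h2, hr⟩ := exists_rep (G u) z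
  have hiv := intermediate_value_uIcc (a := u) (b := w) hG.continuousOn
  rw [uIcc_of_le (by linarith : G u ≤ G w)] at hiv
  obtain ⟨α, hα, hα'⟩ := hiv (show r ∈ Icc (G u) (G w) from ⟨h1, by linarith⟩)
  obtain ⟨β, hβ, hβ'⟩ := hiv (show r + 1 ∈ Icc (G u) (G w) from ⟨by linarith, by linarith⟩)
  exact ⟨α, hα, β, hβ, by rw [hα', hβ'], by rw [hα', hr]⟩

lemma IsLift.projS_eq_of_eq_add_one {g : Circle1 → Circle1} {G : ℝ → ℝ} (hG : IsLift g G)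
    {α β : ℝ} (h : G β = G α + 1) : g (projS β) = g (projS α) := by
  rw [← hG.2, ← hG.2, h]
  exact_mod_cast projS_add_int (G α) 1

/-- An iterate whose lifting stretches an interval shorter than `1` to length `2` forces positive
entropy. -/
lemma topEnt_ne_zero_of_stretch {f : Circle1 → Circle1} {n : ℕ} (hn : 0 < n) {G : ℝ → ℝ}
    (hG : IsLift f^[n] G) {u w : ℝ} (huw : |w - u| < 1) (h : G u + 2 ≤ G w) : topEnt f ≠ 0 := by
  obtain ⟨δ, hδ, hmod⟩ := exists_modulus hG.1 (min u w) (max u w) one_pos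
  have hδ' : 0 < min δ (1 - |w - u|) := lt_min hδ (by linarith)
  refine topEnt_ne_zero_of_backBranching hδ' hn fun z => ?_
  obtain ⟨α, hα, β, hβ, hαβ, hz⟩ := exists_pair_of_stretch hG.1 h z
  refine ⟨projS α, projS β, by rw [← hG.2, hz], ?_, 0, hn, ?_⟩
  · rw [hG.projS_eq_of_eq_add_one hαβ, ← hG.2, hz]
  · by_contra hlt
    obtain ⟨k, hk⟩ := exists_int_of_dist_lt (not_le.1 hlt)
    have hk1 := hk.trans_le (min_le_left _ _)
    have hk2 := hk.trans_le (min_le_right _ _)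
    rcases eq_or_ne k 0 with rfl | hk0
    · have := hmod α hα β hβ (by simpa using hk1)
      rw [hαβ] at this
      norm_num at this
    · have h1 : (1 : ℝ) ≤ |(k : ℝ)| := by exact_mod_cast Int.one_le_abs hk0
      have h2 : |α - β| ≤ |w - u| := by
        rw [abs_sub_comm α β]
        exact abs_sub_le_of_uIcc_subset_uIcc (uIcc_subset_uIcc hα hβ)
      have h3 := abs_sub_abs_le_abs_sub (k : ℝ) (α - β)
      rw [abs_sub_comm (k : ℝ)] at h3
      linarith

lemma topEnt_ne_zero_of_two_le_degree {f : Circle1 → Circle1} {F : ℝ → ℝ} (hF : IsLift f F)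
    {d : ℤ} (hd : ∀ x, F (x + 1) = F x + d) (h2 : 2 ≤ |d|) : topEnt f ≠ 0 := by
  obtain ⟨u, w, hsub, h⟩ : ∃ u w : ℝ, uIcc u w ⊆ Icc 0 1 ∧ F u + 2 ≤ F w := by
    have h1 := hd 0
    rw [zero_add] at h1
    rcases le_abs.1 h2 with h2 | h2
    · have : (2 : ℝ) ≤ d := by exact_mod_cast h2
      exact ⟨0, 1, by rw [uIcc_of_le zero_le_one], by linarith⟩
    · have : (2 : ℝ) ≤ -d := by exact_mod_cast h2
      exact ⟨1, 0, by rw [uIcc_comm, uIcc_of_le zero_le_one], by linarith⟩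
  obtain ⟨δ, hδ, hmod⟩ := exists_modulus hF.1 (-1) 2 one_pos
  have hδ' : 0 < min δ 1 := lt_min hδ one_pos
  refine topEnt_ne_zero_of_backBranching (m := 1) hδ' one_pos fun z => ?_
  obtain ⟨α, hα, β, hβ, hαβ, hz⟩ := exists_pair_of_stretch hF.1 h z
  refine ⟨projS α, projS β, by rw [Function.iterate_one, ← hF.2, hz], ?_, 0, one_pos, ?_⟩
  · rw [Function.iterate_one, hF.projS_eq_of_eq_add_one hαβ, ← hF.2, hz]
  · by_contra hlt
    obtain ⟨k, hk⟩ := exists_int_of_dist_lt (not_le.1 hlt)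
    have hk1 := hk.trans_le (min_le_left _ _)
    have hk2 := abs_lt.1 (hk.trans_le (min_le_right _ _))
    obtain ⟨ha0, ha1⟩ := hsub hα
    have := hmod α ⟨by linarith, by linarith⟩ (β + k) ⟨by linarith, by linarith⟩
      (by rwa [← sub_sub])
    rw [map_add_int hd, hαβ, abs_lt] at this
    -- the two lifts are `1 + k * d` apart, and `k * d = -1` is impossible
    have e1 : -1 < k * d + 1 := by
      have : (-1 : ℝ) < k * d + 1 := by linarith
      exact_mod_cast this
    have e2 : k * d + 1 < 1 := by
      have : (k : ℝ) * d + 1 < 1 := by linarith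
      exact_mod_cast this
    have e3 : d * (-k) = 1 := by linarith [mul_comm d k]
    have := Int.isUnit_iff_abs_eq.1 (IsUnit.of_mul_eq_one _ e3)
    omega

/-- A real number keeps a positive distance from the integers different from it. -/
lemma exists_gap (θ : ℝ) :
    ∃ ε > 0, ∀ i : ℤ, ¬ ((i : ℝ) < θ ∧ θ < i + ε) ∧ ¬ (i - ε < θ ∧ θ < i) := by
  have key : ∀ θ : ℝ, ∃ ε > 0, ∀ i : ℤ, ¬ ((i : ℝ) < θ ∧ θ < i + ε) := by
    intro θ
    refine ⟨min 1 (if θ = ⌊θ⌋ then 1 else θ - ⌊θ⌋), ?_, ?_⟩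
    · refine lt_min one_pos ?_
      split_ifs with h
      · exact one_pos
      · exact sub_pos.2 (lt_of_le_of_ne (Int.floor_le θ) (Ne.symm h))
    · rintro i ⟨h1, h2⟩
      have h3 : ⌊θ⌋ = i := Int.floor_eq_iff.2
        ⟨h1.le, h2.trans_le (by gcongr; exact min_le_left _ _)⟩
      have h4 := min_le_right 1 (if θ = ⌊θ⌋ then 1 else θ - ⌊θ⌋)
      rw [h3] at h4 h2
      rw [if_neg h1.ne'] at h4 h2
      linarith
  obtain ⟨ε₁, hε₁, h₁⟩ := key θ
  obtain ⟨ε₂, hε₂, h₂⟩ := key (-θ)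
  refine ⟨min ε₁ ε₂, lt_min hε₁ hε₂, fun i => ⟨fun h => h₁ i ⟨h.1, ?_⟩, fun h => h₂ (-i) ?_⟩⟩
  · linarith [min_le_left ε₁ ε₂]
  · push_cast
    exact ⟨by linarith, by linarith [min_le_right ε₁ ε₂]⟩

/-- If two points `x ∈ [c, p]` and `x' ∈ [p, c + 1]` are close on the circle, then they are close to
the common endpoint `p`, or to the common endpoint `c ≡ c + 1`, from opposite sides. -/
lemma close_cases {c p x x' δ : ℝ} {k : ℤ} (hδ1 : δ ≤ 1) (hx : x ∈ Icc c p)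
    (hx' : x' ∈ Icc p (c + 1)) (h : |x - x' - k| < δ) :
    (p - δ < x ∧ x' < p + δ) ∨ (x < c + δ ∧ c + 1 - δ < x') := by
  obtain ⟨h1, h2⟩ := abs_lt.1 h
  obtain ⟨a1, a2⟩ := hx
  obtain ⟨b1, b2⟩ := hx'
  have k1 : (k : ℝ) < 1 := by linarith
  have k2 : (-2 : ℝ) < k := by linarith
  have k1' : k < 1 := by exact_mod_cast k1
  have k2' : -2 < k := by exact_mod_cast k2
  obtain rfl | rfl : k = 0 ∨ k = -1 := by omega
  · left
    push_cast at h1 h2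
    constructor <;> linarith
  · right
    push_cast at h1 h2
    constructor <;> linarith


/-- Two close points on opposite sides of `q` cannot both lie in the same small one-sided punctured
neighbourhood of `s` modulo `1`: otherwise `q` itself would lie there, which `hgap` excludes. -/
lemma no_pinch {s q ε x x' r r' : ℝ} (hε : ε ≤ 1 / 2)
    (hgap : ∀ i : ℤ, ¬ ((i : ℝ) < q - s ∧ q - s < i + ε) ∧ ¬ (i - ε < q - s ∧ q - s < i))
    (hx : x ≤ q) (hx' : q ≤ x') (hxx : x' - x < 1 / 2) (hr : projS r = projS x)
    (hr' : projS r' = projS x')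
    (h : (s < r ∧ r < s + ε ∧ s < r' ∧ r' < s + ε) ∨
      (s + 1 - ε < r ∧ r < s + 1 ∧ s + 1 - ε < r' ∧ r' < s + 1)) : False := by
  obtain ⟨i, hi⟩ := projS_eq_iff.1 hr
  obtain ⟨j, hj⟩ := projS_eq_iff.1 hr'
  have h1 : (i : ℝ) - j < 1 := by rcases h with h | h <;> linarith [h.1, h.2.1, h.2.2.1, h.2.2.2]
  have h2 : (-1 : ℝ) < i - j := by rcases h with h | h <;> linarith [h.1, h.2.1, h.2.2.1, h.2.2.2]
  have h1' : i - j < 1 := by exact_mod_cast h1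
  have h2' : -1 < i - j := by exact_mod_cast h2
  obtain rfl : i = j := by omega
  rcases h with ⟨a1, a2, a3, a4⟩ | ⟨a1, a2, a3, a4⟩
  · exact (hgap (-i)).1 (by push_cast; constructor <;> linarith)
  · exact (hgap (-i + 1)).2 (by push_cast; constructor <;> linarith)

/-- A map of degree `0` whose lifting has oscillation at least `1` folds the circle: the two arcs
`[c, p]` and `[p, c + 1]` are both mapped onto the whole circle. The two preimages of a point chosen
in these arcs can only be close when the point is close to `s = F c`, on the right side of `s` if they
are close to `c` and on the left side if they are close to `p`. Such a close pair straddles `c` or `p`,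
so its two members are not on the same side of `s`; hence if the preimages of both are
close pairs again, then one of these pairs is near `c` and the other is near `p`. -/
lemma topEnt_ne_zero_of_fold {f : Circle1 → Circle1} {F : ℝ → ℝ} (hF : IsLift f F)
    (hd : ∀ x, F (x + 1) = F x) {c p : ℝ} (hcp : c < p) (hpc : p < c + 1) (h : F p = F c + 1) :
    topEnt f ≠ 0 := by
  set s := F c with hs
  obtain ⟨ε₁, hε₁, hgap₁⟩ := exists_gap (p - s)
  obtain ⟨ε₂, hε₂, hgap₂⟩ := exists_gap (c - s)
  obtain ⟨ε, hε, hεh, hgp, hgc⟩ : ∃ ε > 0, ε ≤ 1 / 2 ∧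
      (∀ i : ℤ, ¬ ((i : ℝ) < p - s ∧ p - s < i + ε) ∧ ¬ (i - ε < p - s ∧ p - s < i)) ∧
      (∀ i : ℤ, ¬ ((i : ℝ) < c - s ∧ c - s < i + ε) ∧ ¬ (i - ε < c - s ∧ c - s < i)) := by
    have m1 : min (min ε₁ ε₂) (1 / 2) ≤ ε₁ := (min_le_left _ _).trans (min_le_left _ _)
    have m2 : min (min ε₁ ε₂) (1 / 2) ≤ ε₂ := (min_le_left _ _).trans (min_le_right _ _)
    refine ⟨min (min ε₁ ε₂) (1 / 2), by positivity, min_le_right _ _, fun i => ⟨fun h => ?_,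
      fun h => ?_⟩, fun i => ⟨fun h => ?_, fun h => ?_⟩⟩
    · exact (hgap₁ i).1 ⟨h.1, by linarith [h.2]⟩
    · exact (hgap₁ i).2 ⟨by linarith [h.1], h.2⟩
    · exact (hgap₂ i).1 ⟨h.1, by linarith [h.2]⟩
    · exact (hgap₂ i).2 ⟨by linarith [h.1], h.2⟩
  obtain ⟨δ₀, hδ₀, hmod⟩ := exists_modulus hF.1 c (c + 1) hε
  obtain ⟨δ, hδ, hδm, hδ4, hδp, hδc⟩ : ∃ δ > 0, δ ≤ δ₀ ∧ δ ≤ 1 / 4 ∧ 4 * δ ≤ p - c ∧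
      4 * δ ≤ c + 1 - p := by
    refine ⟨min (min δ₀ (1 / 4)) (min ((p - c) / 4) ((c + 1 - p) / 4)), ?_, ?_, ?_, ?_, ?_⟩
    · have : 0 < p - c := by linarith
      have : 0 < c + 1 - p := by linarith
      positivity
    · exact (min_le_left _ _).trans (min_le_left _ _)
    · exact (min_le_left _ _).trans (min_le_right _ _)
    · linarith [(min_le_right (min δ₀ (1 / 4)) (min ((p - c) / 4) ((c + 1 - p) / 4))).trans
        (min_le_left _ _)]
    · linarith [(min_le_right (min δ₀ (1 / 4)) (min ((p - c) / 4) ((c + 1 - p) / 4))).trans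
        (min_le_right _ _)]
  have hFc1 : F (c + 1) = s := hd c
  -- points near `c` and points near `p` are far apart on the circle
  have hfar : ∀ x x' : ℝ, c ≤ x → x < c + δ → p - δ < x' → x' ≤ p →
      δ ≤ dist (projS x) (projS x') := by
    intro x x' a1 a2 a3 a4
    by_contra hlt
    obtain ⟨k, hk⟩ := exists_int_of_dist_lt (not_le.1 hlt)
    obtain ⟨h1, h2⟩ := abs_lt.1 hk
    have k1 : (k : ℝ) < 0 := by linarith
    have k2 : (-1 : ℝ) < k := by linarith
    have k1' : k < 0 := by exact_mod_cast k1
    have k2' : -1 < k := by exact_mod_cast k2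
    omega
  -- Either some two preimages are far apart, or there is a close pair of preimages.
  have key : ∀ z : Circle1, (∃ x₁ x₂, f x₁ = z ∧ f x₂ = z ∧ δ ≤ dist x₁ x₂) ∨
      ∃ r a b, projS r = z ∧ f (projS a) = z ∧ f (projS b) = z ∧ a ∈ Icc c p ∧ b ∈ Icc p (c + 1) ∧
        s < r ∧ r < s + 1 ∧ ((p - δ < a ∧ b < p + δ ∧ s + 1 - ε < r) ∨
          (a < c + δ ∧ c + 1 - δ < b ∧ r < s + ε)) := by
    intro z
    obtain ⟨r, hr1, hr2, hrz⟩ := exists_rep s z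
    rcases hr1.eq_or_lt with rfl | hr1'
    · refine Or.inl ⟨projS c, projS p, by rw [← hF.2, ← hs, hrz], ?_,
        hfar c p le_rfl (by linarith) (by linarith) le_rfl⟩
      rw [← hF.2, h, ← hrz]
      exact_mod_cast projS_add_int s 1
    · obtain ⟨a, ha, har⟩ := intermediate_value_Icc hcp.le hF.1.continuousOn
        (show r ∈ Icc (F c) (F p) from ⟨hr1, by linarith⟩)
      obtain ⟨b, hb, hbr⟩ := intermediate_value_Icc' hpc.le hF.1.continuousOn
        (show r ∈ Icc (F (c + 1)) (F p) from ⟨by linarith, by linarith⟩)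
      have hfa : f (projS a) = z := by rw [← hF.2, har, hrz]
      have hfb : f (projS b) = z := by rw [← hF.2, hbr, hrz]
      by_cases hdist : δ ≤ dist (projS a) (projS b)
      · exact Or.inl ⟨_, _, hfa, hfb, hdist⟩
      · obtain ⟨k, hk⟩ := exists_int_of_dist_lt (not_le.1 hdist)
        refine Or.inr ⟨r, a, b, hrz, hfa, hfb, ha, hb, hr1', hr2, ?_⟩
        have hac : a ∈ Icc c (c + 1) := ⟨ha.1, by linarith [ha.2]⟩
        rcases close_cases (by linarith) ha hb hk with ⟨h1, h2⟩ | ⟨h1, h2⟩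
        · refine Or.inl ⟨h1, h2, ?_⟩
          have := hmod a hac p ⟨hcp.le, hpc.le⟩ (abs_lt.2 ⟨by linarith, by linarith [ha.2]⟩)
          linarith [(abs_lt.1 this).1]
        · refine Or.inr ⟨h1, h2, ?_⟩
          have := hmod a hac c ⟨le_rfl, by linarith⟩
            (abs_lt.2 ⟨by linarith [ha.1], by linarith⟩)
          linarith [(abs_lt.1 this).2]
  have hsurj : ∀ z, ∃ x, f x = z := fun z => by
    rcases key z with ⟨x, -, hx, -⟩ | ⟨-, a, -, -, ha, -⟩
    exacts [⟨x, hx⟩, ⟨_, ha⟩]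
  have hit : ∀ x, f^[2] x = f (f x) := fun x => rfl
  refine topEnt_ne_zero_of_backBranching (m := 2) hδ two_pos fun z => ?_
  rcases key z with ⟨x₁, x₂, h₁, h₂, hx⟩ | ⟨r, a, b, -, hfa, hfb, ha, hb, -, -, hab⟩
  · obtain ⟨w₁, rfl⟩ := hsurj x₁
    obtain ⟨w₂, rfl⟩ := hsurj x₂
    exact ⟨w₁, w₂, h₁, h₂, 1, by norm_num, hx⟩
  rcases key (projS a) with ⟨x₁, x₂, h₁, h₂, hx⟩ |
    ⟨r₁, a₁, b₁, hr₁, hfa₁, -, ha₁, -, hl₁, hu₁, hab₁⟩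
  · exact ⟨x₁, x₂, by rw [hit, h₁, hfa], by rw [hit, h₂, hfa], 0, by norm_num, hx⟩
  rcases key (projS b) with ⟨x₁, x₂, h₁, h₂, hx⟩ |
    ⟨r₂, a₂, b₂, hr₂, hfa₂, -, ha₂, -, hl₂, hu₂, hab₂⟩
  · exact ⟨x₁, x₂, by rw [hit, h₁, hfb], by rw [hit, h₂, hfb], 0, by norm_num, hx⟩
  refine ⟨projS a₁, projS a₂, by rw [hit, hfa₁, hfa], by rw [hit, hfa₂, hfb], 0, by norm_num, ?_⟩
  -- the pair `a`, `b` straddles `p` or `c`, so `r₁` and `r₂` are on different sides of `s`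
  have hside : ¬ ((s < r₁ ∧ r₁ < s + ε ∧ s < r₂ ∧ r₂ < s + ε) ∨
      (s + 1 - ε < r₁ ∧ r₁ < s + 1 ∧ s + 1 - ε < r₂ ∧ r₂ < s + 1)) := by
    intro hsame
    rcases hab with ⟨h1, h2, -⟩ | ⟨h1, h2, -⟩
    · exact no_pinch hεh hgp ha.2 hb.1 (by linarith) hr₁ hr₂ hsame
    · have hr₂' : projS r₂ = projS (b - 1) := by
        rw [hr₂]
        exact projS_eq_iff.2 ⟨1, by push_cast; ring⟩
      refine no_pinch hεh hgc (x := b - 1) (x' := a) (by linarith [hb.2]) ha.1 (by linarith)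
        hr₂' hr₁ ?_
      tauto
  rcases hab₁ with ⟨h1, -, h2⟩ | ⟨h1, -, h2⟩ <;> rcases hab₂ with ⟨h3, -, h4⟩ | ⟨h3, -, h4⟩
  · exact absurd (Or.inr ⟨h2, hu₁, h4, hu₂⟩) hside
  · rw [dist_comm]
    exact hfar a₂ a₁ ha₂.1 h3 h1 ha₁.2
  · exact hfar a₁ a₂ ha₁.1 h1 h3 ha₂.2
  · exact absurd (Or.inl ⟨hl₁, h2, hl₂, h4⟩) hside


/-! ### The invariant interval -/

/-- If a lifting fixes or exchanges the endpoints of `[y, y + 1]`, the iterated images of this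
interval increase to an invariant interval, whose length is at most `2` when the entropy is zero. -/
lemma exists_invariant_Icc {f : Circle1 → Circle1} (h0 : topEnt f = 0) {F : ℝ → ℝ}
    (hF : IsLift f F) {y : ℝ}
    (hy : (F y = y ∧ F (y + 1) = y + 1) ∨ (F y = y + 1 ∧ F (y + 1) = y)) :
    ∃ a b, 1 ≤ b - a ∧ b - a ≤ 2 ∧ F '' Icc a b = Icc a b := by
  set K : ℕ → Set ℝ := fun n => F^[n] '' Icc y (y + 1) with hK
  have hcont : ∀ n, Continuous F^[n] := fun n => hF.1.iterate n
  have hend : ∀ n, (F^[n] y = y ∧ F^[n] (y + 1) = y + 1) ∨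
      (F^[n] y = y + 1 ∧ F^[n] (y + 1) = y) := by
    intro n
    induction n with
    | zero => simp
    | succ n ih =>
      simp only [Function.iterate_succ_apply']
      rcases ih with ⟨h1, h2⟩ | ⟨h1, h2⟩ <;> rw [h1, h2] <;> tauto
  have hsub0 : ∀ n, Icc y (y + 1) ⊆ K n := by
    intro n
    have hiv := intermediate_value_uIcc (a := y) (b := y + 1) (hcont n).continuousOn
    rw [uIcc_of_le (by linarith : y ≤ y + 1)] at hiv
    refine Subset.trans ?_ hiv
    rcases hend n with ⟨h1, h2⟩ | ⟨h1, h2⟩ <;> rw [h1, h2]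
    · exact Icc_subset_uIcc
    · exact Icc_subset_uIcc'
  have himg : ∀ n, F '' K n = K (n + 1) := by
    intro n
    rw [hK, ← image_comp, ← Function.iterate_succ']
  have hmono : Monotone K := by
    refine monotone_nat_of_le_succ fun n => ?_
    have := image_mono (f := F^[n]) (hsub0 1)
    rwa [hK, ← image_comp, ← Function.iterate_add] at this
  have hdiam : ∀ n, ∀ p ∈ K n, ∀ q ∈ K n, p - q ≤ 2 := by
    rintro n _ ⟨w, hw, rfl⟩ _ ⟨u, hu, rfl⟩
    by_contra! hlt
    have hwu : |w - u| ≤ 1 := abs_le.2 ⟨by linarith [hw.1, hu.2], by linarith [hw.2, hu.1]⟩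
    have hn : 0 < n := by
      rcases Nat.eq_zero_or_pos n with rfl | hn
      · simp only [Function.iterate_zero, id] at hlt
        linarith [(abs_le.1 hwu).2]
      · exact hn
    have hwu' : |w - u| < 1 := by
      refine lt_of_le_of_ne hwu fun heq => ?_
      -- at distance `1` the two points are the endpoints, whose images are `1` apart
      have hcase : (w = y + 1 ∧ u = y) ∨ (w = y ∧ u = y + 1) := by
        rcases (abs_eq zero_le_one).1 heq with h | h
        · left; constructor <;> linarith [hw.2, hu.1]
        · right; constructor <;> linarith [hw.1, hu.2]
      rcases hcase with ⟨rfl, rfl⟩ | ⟨rfl, rfl⟩ <;> rcases hend n with ⟨h1, h2⟩ | ⟨h1, h2⟩ <;>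
        linarith
    exact topEnt_ne_zero_of_stretch hn (hF.iterate n) hwu' (by linarith) h0
  set S : Set ℝ := ⋃ n, K n with hS
  have hS0 : Icc y (y + 1) ⊆ S := (hsub0 0).trans (subset_iUnion K 0)
  have hyS : y ∈ S := hS0 ⟨le_rfl, by linarith⟩
  have hyS' : y + 1 ∈ S := hS0 ⟨by linarith, le_rfl⟩
  have hFS : F '' S = S := by
    rw [hS, image_iUnion]
    simp only [himg]
    exact hmono.iUnion_nat_add 1
  have hSdiam : ∀ p ∈ S, ∀ q ∈ S, p - q ≤ 2 := by
    intro p hp q hq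
    obtain ⟨n, hn⟩ := mem_iUnion.1 hp
    obtain ⟨k, hk⟩ := mem_iUnion.1 hq
    exact hdiam (max n k) p (hmono (le_max_left n k) hn) q (hmono (le_max_right n k) hk)
  have hconn : IsConnected S := by
    refine ⟨⟨y, hyS⟩, isPreconnected_iUnion ⟨y, mem_iInter.2 fun n => hsub0 n ⟨le_rfl, by linarith⟩⟩
      fun n => isPreconnected_Icc.image _ (hcont n).continuousOn⟩
  have hsubS : S ⊆ Icc (y - 2) (y + 2) := fun p hp =>
    ⟨by linarith [hSdiam y hyS p hp], by linarith [hSdiam p hp y hyS]⟩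
  have hcomp : IsCompact (closure S) :=
    isCompact_Icc.of_isClosed_subset isClosed_closure (closure_minimal hsubS isClosed_Icc)
  have hIcc := eq_Icc_of_connected_compact hconn.closure hcomp
  set a := sInf (closure S)
  set b := sSup (closure S)
  have hya : a ≤ y := (hIcc ▸ subset_closure hyS : y ∈ Icc a b).1
  have hyb : y + 1 ≤ b := (hIcc ▸ subset_closure hyS' : y + 1 ∈ Icc a b).2
  refine ⟨a, b, by linarith, ?_, ?_⟩
  · have hbc : b ∈ closure S := hIcc ▸ right_mem_Icc.2 (by linarith)
    have hac : a ∈ closure S := hIcc ▸ left_mem_Icc.2 (by linarith)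
    have h1 : ∀ q ∈ S, b - 2 ≤ q := fun q hq => by
      have : closure S ⊆ Iic (q + 2) :=
        closure_minimal (fun p hp => by simpa using (by linarith [hSdiam p hp q hq] : p ≤ q + 2))
          isClosed_Iic
      have := mem_Iic.1 (this hbc)
      linarith
    have : b - 2 ≤ a := mem_Ici.1 (closure_minimal (fun q hq => mem_Ici.2 (h1 q hq)) isClosed_Ici hac)
    linarith
  · rw [← hIcc, image_closure_of_isCompact hcomp hF.1.continuousOn, hFS]

/-- In degree `±1`, an invariant interval of length at most `2` can be replaced by one of length
less than `2`, possibly after changing the lifting: if the length is exactly `2`, both halves are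
invariant or exchanged, and the left half is invariant under a translate of the lifting. -/
lemma exists_invariant_Icc_lt {f : Circle1 → Circle1} {F : ℝ → ℝ} (hF : IsLift f F) {d : ℤ}
    (hd : ∀ x, F (x + 1) = F x + d) (hd1 : d = 1 ∨ d = -1) {a b : ℝ} (h1 : 1 ≤ b - a)
    (h2 : b - a ≤ 2) (hab : F '' Icc a b = Icc a b) :
    ∃ F' a' b', IsLift f F' ∧ (∀ x, F' (x + 1) = F' x + d) ∧ 1 ≤ b' - a' ∧ b' - a' < 2 ∧
      F' '' Icc a' b' = Icc a' b' := by
  rcases h2.lt_or_eq with h2 | h2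
  · exact ⟨F, a, b, hF, hd, h1, h2, hab⟩
  obtain rfl : b = a + 2 := by linarith
  have hmaps : ∀ x, a ≤ x → x ≤ a + 2 → a ≤ F x ∧ F x ≤ a + 2 := fun x hx hx' => by
    have : F x ∈ Icc a (a + 2) := hab ▸ mem_image_of_mem F ⟨hx, hx'⟩
    exact this
  have e0 := hmaps a le_rfl (by linarith)
  have e1 := hmaps (a + 1) (by linarith) (by linarith)
  have e2 := hmaps (a + 1 + 1) (by linarith) (by linarith)
  have d0 := hd a
  have d1 := hd (a + 1)
  have hiv := intermediate_value_uIcc (a := a) (b := a + 1) hF.1.continuousOn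
  rw [uIcc_of_le (by linarith : a ≤ a + 1)] at hiv
  rcases hd1 with rfl | rfl
  · push_cast at d0 d1 hd
    refine ⟨F, a, a + 1, hF, by simpa using hd, by linarith, by linarith, ?_⟩
    apply Subset.antisymm
    · rintro _ ⟨x, hx, rfl⟩
      have := hmaps (x + 1) (by linarith [hx.1]) (by linarith [hx.2])
      rw [hd] at this
      exact ⟨(hmaps x hx.1 (by linarith [hx.2])).1, by linarith⟩
    · refine Subset.trans ?_ hiv
      rw [show F a = a by linarith, show F (a + 1) = a + 1 by linarith]
      exact Icc_subset_uIcc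
  · push_cast at d0 d1 hd
    refine ⟨fun x => F x - (1 : ℤ), a, a + 1, hF.sub_int 1, fun x => ?_, by linarith, by linarith,
      ?_⟩
    · push_cast
      rw [hd]; ring
    apply Subset.antisymm
    · rintro _ ⟨x, hx, rfl⟩
      have := hmaps (x + 1) (by linarith [hx.1]) (by linarith [hx.2])
      rw [hd] at this
      have h3 := (hmaps x hx.1 (by linarith [hx.2])).2
      push_cast
      exact ⟨by linarith, by linarith⟩
    · intro z hz
      have : z + 1 ∈ F '' Icc a (a + 1) := by
        apply hiv
        rw [show F a = a + 2 by linarith, show F (a + 1) = a + 1 by linarith]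
        exact Icc_subset_uIcc' ⟨by linarith [hz.1], by linarith [hz.2]⟩
      obtain ⟨x, hx, hxz⟩ := this
      exact ⟨x, hx, by push_cast; linarith⟩

lemma exists_lift_of_degree_one {f : Circle1 → Circle1} {F : ℝ → ℝ} (hF : IsLift f F)
    (hd : ∀ x, F (x + 1) = F x + 1) (hfix : ∃ z, f z = z) :
    ∃ F' y, IsLift f F' ∧ (∀ x, F' (x + 1) = F' x + 1) ∧ F' y = y ∧ F' (y + 1) = y + 1 := by
  obtain ⟨z, hz⟩ := hfix
  obtain ⟨y, rfl⟩ := exists_projS z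
  rw [← hF.2] at hz
  obtain ⟨k, hk⟩ := projS_eq_iff.1 hz
  refine ⟨fun x => F x - k, y, hF.sub_int k, fun x => ?_, ?_, ?_⟩
  · show F (x + 1) - k = F x - k + 1
    rw [hd]; ring
  · show F y - k = y
    rw [hk]; ring
  · show F (y + 1) - k = y + 1
    rw [hd, hk]; ring

/-- In degree `-1`, the function `F x - x` drops by `2` along each period, so it takes the
value `1`. -/
lemma exists_swap_of_degree_neg_one {F : ℝ → ℝ} (hF : Continuous F)
    (hd : ∀ x, F (x + 1) = F x - 1) : ∃ y, F y = y + 1 ∧ F (y + 1) = y := by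
  have hd' : ∀ x, F (x + 1) = F x + ((-1 : ℤ) : ℝ) := fun x => by rw [hd]; push_cast; ring
  set n : ℤ := ⌈F 0⌉ with hn
  have h1 := map_add_int hd' 0 n
  have h2 := map_add_int hd' 0 (-1 - |n|)
  have hle : F 0 ≤ n := Int.le_ceil _
  have hlt : (n : ℝ) < F 0 + 1 := Int.ceil_lt_add_one _
  have ha : -|(n : ℝ)| ≤ n := neg_abs_le _
  have ha' : (n : ℝ) ≤ |(n : ℝ)| := le_abs_self _
  have h3 := map_add_int hd' 0 (|n|)
  push_cast at h1 h2 h3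
  simp only [zero_add] at h1 h2 h3
  have hiv := intermediate_value_Icc' (f := fun x => F x - x)
    (show (-1 - |(n : ℝ)|) ≤ |(n : ℝ)| by linarith [abs_nonneg (n : ℝ)])
    ((hF.sub continuous_id).continuousOn)
  obtain ⟨y, -, hy⟩ := hiv (show (1 : ℝ) ∈ Icc (F |(n : ℝ)| - |(n : ℝ)|)
    (F (-1 - |(n : ℝ)|) - (-1 - |(n : ℝ)|)) from ⟨by linarith, by linarith⟩)
  simp only at hy
  have hy' : F y = y + 1 := by linarith
  exact ⟨y, hy', by rw [hd, hy']; ring⟩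

/-- In degree `0` the lifting attains its minimum at some `c` and its maximum in `[c, c + 1]`; an
oscillation of at least `1` would make it a fold over that period. -/
lemma range_lt_one_of_degree_zero {f : Circle1 → Circle1} (h0 : topEnt f = 0) {F : ℝ → ℝ}
    (hF : IsLift f F) (hd : ∀ x, F (x + 1) = F x) :
    ∃ m M, M - m < 1 ∧ ∀ x, m ≤ F x ∧ F x ≤ M := by
  have hper : ∀ t x : ℝ, ∃ x' ∈ Icc t (t + 1), F x' = F x := by
    intro t x
    have h := map_add_int (d := 0) (fun x => by simpa using hd x) x (-⌊x - t⌋)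
    refine ⟨x + (-⌊x - t⌋ : ℤ), ?_, by simpa using h⟩
    push_cast
    exact ⟨by linarith [Int.floor_le (x - t)], by linarith [Int.lt_floor_add_one (x - t)]⟩
  obtain ⟨c, -, hc⟩ := (isCompact_Icc (a := (0 : ℝ)) (b := 0 + 1)).exists_isMinOn
    (nonempty_Icc.2 (by norm_num)) hF.1.continuousOn
  have hmin : ∀ x, F c ≤ F x := fun x => by
    obtain ⟨x', hx', he⟩ := hper 0 x
    exact he ▸ hc hx'
  obtain ⟨q, hq, hqmax⟩ := (isCompact_Icc (a := c) (b := c + 1)).exists_isMaxOn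
    (nonempty_Icc.2 (by linarith)) hF.1.continuousOn
  have hmax : ∀ x, F x ≤ F q := fun x => by
    obtain ⟨x', hx', he⟩ := hper c x
    exact he ▸ hqmax hx'
  refine ⟨F c, F q, ?_, fun x => ⟨hmin x, hmax x⟩⟩
  by_contra! hge
  obtain ⟨p, hp, hpF⟩ := intermediate_value_Icc hq.1 hF.1.continuousOn
    (show F c + 1 ∈ Icc (F c) (F q) from ⟨by linarith, by linarith⟩)
  have hpc : p ≠ c := by rintro rfl; linarith
  have hpc' : p ≠ c + 1 := by rintro rfl; linarith [hd c]
  exact topEnt_ne_zero_of_fold hF hd (lt_of_le_of_ne hp.1 hpc.symm)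
    (lt_of_le_of_ne (hp.2.trans hq.2) hpc') hpF h0

/-- The lifting lemma for circle maps with zero entropy and a fixed point. -/
theorem circle_lifting_lemma (f : Circle1 → Circle1) (hf : Continuous f)
    (h0 : topEnt f = 0) (hfix : ∃ z, f z = z) :
    ∃ F : ℝ → ℝ, ∃ a b : ℝ, IsLift f F ∧ 1 ≤ b - a ∧ b - a < 2 ∧
      MapsTo F (Icc a b) (Icc a b) ∧
      ((∀ x : ℝ, F (x + 1) = F x) →
        b - a = 1 ∧ sSup (F '' Icc a b) - sInf (F '' Icc a b) < 1) ∧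
      ((∀ x : ℝ, F (x + 1) = F x + 1) →
        F '' Icc a b = Icc a b ∧ MapsTo F (Icc a (b - 1)) (Icc a (b - 1)) ∧
          MapsTo F (Icc (a + 1) b) (Icc (a + 1) b)) ∧
      ((∀ x : ℝ, F (x + 1) = F x - 1) →
        F '' Icc a b = Icc a b ∧ MapsTo F (Icc a (b - 1)) (Icc (a + 1) b) ∧
          MapsTo F (Icc (a + 1) b) (Icc a (b - 1))) := by
  obtain ⟨F, hF⟩ := exists_isLift hf
  obtain ⟨d, hd⟩ := hF.exists_degree
  have hdle : |d| < 2 := by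
    by_contra! h2
    exact topEnt_ne_zero_of_two_le_degree hF hd h2 h0
  obtain ⟨hd1, hd2⟩ := abs_lt.1 hdle
  by_cases hd0 : d = 0
  · subst hd0
    simp only [Int.cast_zero, add_zero] at hd
    obtain ⟨m, M, hmM, hrange⟩ := range_lt_one_of_degree_zero h0 hF hd
    refine ⟨F, m, m + 1, hF, by linarith, by linarith, fun x _ => ⟨(hrange x).1, ?_⟩,
      fun _ => ⟨by ring, ?_⟩, fun h => ?_, fun h => ?_⟩
    · linarith [(hrange x).2]
    · have hne : (F '' Icc m (m + 1)).Nonempty := (nonempty_Icc.2 (by linarith)).image F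
      have h1 : sSup (F '' Icc m (m + 1)) ≤ M := csSup_le hne (by
        rintro _ ⟨x, -, rfl⟩
        exact (hrange x).2)
      have h2 : m ≤ sInf (F '' Icc m (m + 1)) := le_csInf hne (by
        rintro _ ⟨x, -, rfl⟩
        exact (hrange x).1)
      linarith
    · linarith [h 0, hd 0]
    · linarith [h 0, hd 0]
  have hdpm : d = 1 ∨ d = -1 := by omega
  obtain ⟨F, a, b, hF, hd, h1, h2, hab⟩ : ∃ F a b, IsLift f F ∧ (∀ x, F (x + 1) = F x + d) ∧
      1 ≤ b - a ∧ b - a < 2 ∧ F '' Icc a b = Icc a b := by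
    rcases hdpm with rfl | rfl
    · obtain ⟨F', y, hF', hd', hy⟩ := exists_lift_of_degree_one hF (by simpa using hd) hfix
      obtain ⟨a, b, h1, h2, hab⟩ := exists_invariant_Icc h0 hF' (Or.inl hy)
      exact exists_invariant_Icc_lt hF' (by simpa using hd') (Or.inl rfl) h1 h2 hab
    · obtain ⟨y, hy⟩ := exists_swap_of_degree_neg_one hF.1
        (fun x => by rw [hd]; push_cast; ring)
      obtain ⟨a, b, h1, h2, hab⟩ := exists_invariant_Icc h0 hF (Or.inr hy)
      exact exists_invariant_Icc_lt hF hd (Or.inr rfl) h1 h2 hab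
  have hmaps : MapsTo F (Icc a b) (Icc a b) := fun x hx => hab ▸ mem_image_of_mem F hx
  refine ⟨F, a, b, hF, h1, h2, hmaps, fun h => ?_, fun h => ⟨hab, ?_, ?_⟩, fun h => ⟨hab, ?_, ?_⟩⟩
  · have : (d : ℝ) = 0 := by linarith [h 0, hd 0]
    exact absurd (by exact_mod_cast this) hd0
  -- in the remaining cases the bound not given by `F x ∈ [a, b]` comes from `F (x ± 1) ∈ [a, b]`
  · intro x hx
    have h3 := hmaps (x := x) ⟨hx.1, by linarith [hx.2]⟩
    have h4 := hmaps (x := x + 1) ⟨by linarith [hx.1], by linarith [hx.2]⟩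
    rw [h] at h4
    exact ⟨h3.1, by linarith [h4.2]⟩
  · intro x hx
    have h3 := hmaps (x := x) ⟨by linarith [hx.1], hx.2⟩
    have h4 := hmaps (x := x - 1) ⟨by linarith [hx.1], by linarith [hx.2]⟩
    have h5 := h (x - 1)
    rw [sub_add_cancel] at h5
    exact ⟨by linarith [h4.1], h3.2⟩
  · intro x hx
    have h3 := hmaps (x := x) ⟨hx.1, by linarith [hx.2]⟩
    have h4 := hmaps (x := x + 1) ⟨by linarith [hx.1], by linarith [hx.2]⟩
    rw [h] at h4
    exact ⟨by linarith [h4.1], h3.2⟩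
  · intro x hx
    have h3 := hmaps (x := x) ⟨by linarith [hx.1], hx.2⟩
    have h4 := hmaps (x := x - 1) ⟨by linarith [hx.1], by linarith [hx.2]⟩
    have h5 := h (x - 1)
    rw [sub_add_cancel] at h5
    exact ⟨h3.1, by linarith [h4.2]⟩

end
end
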